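/- For N ∈ ℕ, N ≥ 4, the closed subspace Y_N of L₁[0,1] generated by the constants and the functions g_{n,k} fails the Daugavet property: there exist a functional g* ∈ Y_N* of norm ≤ 1, an ε > 0 with the slice S(g*, ε) ∩ B(Y_N) nonempty, such that every f in this slice satisfies ‖f − 1‖ ≤ 2 − ε (where 1 is the constant function), so condition (ii) of the slice characterisation of the Daugavet property fails for Y_N. -/

import Mathlib

open MeasureTheory

/-- The exponent of the dyadic scale of the `n`-th generation: `0` for `n = 0`
(so `I_{0,1} = [0,1)`) and `N^n` for `n ≥ 1`. -/
def expn (N n : ℕ) : ℕ := if n = 0 then 0 else N ^ n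

/-- The function `g_{n,k}` from the construction: the translate by `(k-1)/2^{expn N n}` of
`(2^{N^{n+1} - expn N n} - 1)·χ_{I_{N^{n+1},1}} - χ_{I_{expn N n,1} ∖ I_{N^{n+1},1}}`. -/
noncomputable def gNK (N n k : ℕ) (t : ℝ) : ℝ :=
  let s : ℝ := t - ((k : ℝ) - 1) / 2 ^ expn N n
  if s ∈ Set.Ico (0 : ℝ) (1 / 2 ^ N ^ (n + 1)) then
    (2 : ℝ) ^ N ^ (n + 1) / 2 ^ expn N n - 1
  else if s ∈ Set.Ico (0 : ℝ) (1 / 2 ^ expn N n) then -1 else 0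

/-- The peak set `P = ∪ₙ Pₙ` where `Pₙ = {t : Σₖ g_{n,k}(t) > 0}`. -/
def Pset (N : ℕ) : Set ℝ :=
  ⋃ n : ℕ, {t : ℝ | 0 < ∑ k ∈ Finset.Icc 1 (2 ^ expn N n), gNK N n k t}

/-- Lebesgue measure restricted to `[0,1)`, the underlying measure of `L₁[0,1]`. -/
noncomputable def muI : Measure ℝ := volume.restrict (Set.Ico (0 : ℝ) 1)

/-- `Y_N ⊆ L₁[0,1]`: the closed linear span of the constants and the functions `g_{n,k}`,
`n ∈ ℕ`, `1 ≤ k ≤ 2^{N^n}`. -/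
noncomputable def YN (N : ℕ) : Submodule ℝ (Lp ℝ 1 muI) :=
  (Submodule.span ℝ {f : Lp ℝ 1 muI |
      (∃ c : ℝ, ∀ᵐ t ∂muI, f t = c) ∨
      (∃ n k : ℕ, 1 ≤ k ∧ k ≤ 2 ^ expn N n ∧
        ∀ᵐ t ∂muI, f t = gNK N n k t)}).topologicalClosure

/-- The ratio exponent between consecutive scales. -/
def dn (N n : ℕ) : ℕ := N ^ (n + 1) - expn N n

lemma dn_ge (N n : ℕ) (hN : 4 ≤ N) : n + 4 ≤ dn N n ∧ N ^ (n + 1) = expn N n + dn N n := by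
  have key : expn N n + (n + 4) ≤ N ^ (n + 1) := by
    unfold expn
    split_ifs with h
    · subst h; simpa using hN
    · have h1 : 1 ≤ n := Nat.one_le_iff_ne_zero.mpr h
      have h2 : n < 4 ^ n := Nat.lt_pow_self (by norm_num)
      have h3 : 4 ^ n ≤ N ^ n := Nat.pow_le_pow_left hN n
      have h4 : 4 ^ 1 ≤ 4 ^ n := Nat.pow_le_pow_right (by norm_num) h1
      have h5 : N ^ n * 4 ≤ N ^ n * N := Nat.mul_le_mul_left _ hN
      rw [pow_succ]
      omega
  unfold dn
  omega

/-- The ratio between consecutive scales. -/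
def Dn (N n : ℕ) : ℕ := 2 ^ dn N n

lemma expn_succ (N n : ℕ) : expn N (n + 1) = N ^ (n + 1) := by simp [expn]

lemma Dn_spec (N n : ℕ) (hN : 4 ≤ N) : 2 ^ expn N (n + 1) = 2 ^ expn N n * Dn N n := by
  rw [expn_succ, (dn_ge N n hN).2, pow_add, Dn]

lemma Dn_pos (N n : ℕ) : 0 < Dn N n := by unfold Dn; positivity

lemma Dn_two (N n : ℕ) (hN : 4 ≤ N) : 2 ≤ Dn N n := by
  unfold Dn
  calc 2 = 2 ^ 1 := rfl
    _ ≤ _ := Nat.pow_le_pow_right (by norm_num) (by have := (dn_ge N n hN).1; omega)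

/-- index of the scale-`n` interval -/
noncomputable def fl (N n : ℕ) (t : ℝ) : ℕ := ⌊(2 : ℝ) ^ expn N n * t⌋₊

lemma fl_div (N n : ℕ) (hN : 4 ≤ N) (t : ℝ) : fl N (n + 1) t / Dn N n = fl N n t := by
  unfold fl
  rw [← Nat.floor_div_natCast]
  congr 1
  have h : ((2 : ℝ) ^ expn N (n + 1)) = 2 ^ expn N n * (Dn N n : ℝ) := by
    exact_mod_cast Dn_spec N n hN
  have := Dn_pos N n
  rw [h]
  field_simp

lemma fl_lt (N n : ℕ) (t : ℝ) (ht : t ∈ Set.Ico (0 : ℝ) 1) : fl N n t < 2 ^ expn N n := by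
  unfold fl
  rw [Nat.floor_lt (by have := ht.1; positivity)]
  push_cast
  have : (0 : ℝ) < 2 ^ expn N n := by positivity
  nlinarith [ht.2]

lemma gNK_eq (N n k : ℕ) (hN : 4 ≤ N) (hk : 1 ≤ k) (t : ℝ) (ht : 0 ≤ t) :
    gNK N n k t = if k - 1 = fl N n t then
      (if fl N (n + 1) t % Dn N n = 0 then (Dn N n : ℝ) - 1 else -1) else 0 := by
  obtain ⟨j, rfl⟩ : ∃ j, k = j + 1 := ⟨k - 1, by omega⟩
  have hD := Dn_pos N n
  have h : ((2 : ℝ) ^ N ^ (n + 1)) = 2 ^ expn N n * (Dn N n : ℝ) := by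
    rw [← expn_succ]; exact_mod_cast Dn_spec N n hN
  have hp : (0 : ℝ) < 2 ^ expn N n := by positivity
  have hDr : (0 : ℝ) < Dn N n := by exact_mod_cast hD
  have e1 : (t - (((j + 1 : ℕ) : ℝ) - 1) / 2 ^ expn N n) ∈ Set.Ico (0 : ℝ) (1 / 2 ^ N ^ (n + 1))
      ↔ fl N (n + 1) t = j * Dn N n := by
    unfold fl
    rw [Nat.floor_eq_iff (by positivity), expn_succ, h, Set.mem_Ico]
    push_cast
    rw [add_sub_cancel_right, sub_nonneg, sub_lt_iff_lt_add, div_le_iff₀ hp]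
    have : (1 / (2 ^ expn N n * (Dn N n : ℝ)) + (j : ℝ) / 2 ^ expn N n)
      = (j * Dn N n + 1) / (2 ^ expn N n * (Dn N n : ℝ)) := by field_simp; ring
    rw [this, lt_div_iff₀ (by positivity)]
    constructor
    · rintro ⟨a, b⟩; constructor <;> nlinarith
    · rintro ⟨a, b⟩; constructor
      · by_contra hc
        push Not at hc
        nlinarith
      · nlinarith
  have e2 : (t - (((j + 1 : ℕ) : ℝ) - 1) / 2 ^ expn N n) ∈ Set.Ico (0 : ℝ) (1 / 2 ^ expn N n)
      ↔ fl N n t = j := by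
    unfold fl
    rw [Nat.floor_eq_iff (by positivity), Set.mem_Ico]
    push_cast
    rw [add_sub_cancel_right, sub_nonneg, sub_lt_iff_lt_add, div_le_iff₀ hp, ← add_div,
      lt_div_iff₀ hp, mul_comm t, add_comm (1:ℝ)]
  have e3 : fl N (n + 1) t = j * Dn N n ↔ fl N n t = j ∧ fl N (n + 1) t % Dn N n = 0 := by
    rw [← fl_div N n hN t]
    constructor
    · intro h; rw [h]; simp [hD]
    · rintro ⟨a, b⟩
      have := Nat.div_add_mod (fl N (n + 1) t) (Dn N n)
      rw [a, b] at this
      rw [← this]; ring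
  unfold gNK
  have hv : (2 : ℝ) ^ N ^ (n + 1) / 2 ^ expn N n = Dn N n := by
    rw [h, mul_div_cancel_left₀ _ hp.ne']
  simp only [e1, e2, hv]
  simp only [e3, Nat.add_sub_cancel, eq_comm (a := j)]
  by_cases h1 : fl N n t = j <;> by_cases h2 : fl N (n + 1) t % Dn N n = 0 <;> simp [h1, h2]

lemma sum_gNK (N n : ℕ) (hN : 4 ≤ N) (t : ℝ) (ht : t ∈ Set.Ico (0 : ℝ) 1) :
    ∑ k ∈ Finset.Icc 1 (2 ^ expn N n), gNK N n k t =
      (if fl N (n + 1) t % Dn N n = 0 then (Dn N n : ℝ) - 1 else -1) := by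
  have hl := fl_lt N n t ht
  rw [Finset.sum_eq_single (fl N n t + 1)]
  · rw [gNK_eq N n _ hN (by omega) t ht.1]; simp
  · intro k hk hne
    rw [Finset.mem_Icc] at hk
    rw [gNK_eq N n _ hN hk.1 t ht.1, if_neg (by omega)]
  · intro h
    exact absurd (Finset.mem_Icc.mpr ⟨by omega, by omega⟩) h

/-- The `n`-th peak set. -/
def Pn (N n : ℕ) : Set ℝ := {t : ℝ | 0 < ∑ k ∈ Finset.Icc 1 (2 ^ expn N n), gNK N n k t}

lemma mem_Pn (N n : ℕ) (hN : 4 ≤ N) (t : ℝ) (ht : t ∈ Set.Ico (0 : ℝ) 1) :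
    t ∈ Pn N n ↔ fl N (n + 1) t % Dn N n = 0 := by
  have h2 : (2 : ℝ) ≤ Dn N n := by exact_mod_cast Dn_two N n hN
  unfold Pn
  rw [Set.mem_ofPred_eq, sum_gNK N n hN t ht]
  split_ifs with h
  · simp only [h, iff_true]; linarith
  · simp only [h, iff_false]; norm_num

/-- discrete signs -/
def sg (N : ℕ) : ℕ → ℕ → ℝ
  | 0, _ => 1
  | n + 1, i => if i % Dn N n = 0 then -1 else sg N n (i / Dn N n)

/-- discrete martingale -/
def Gd (N : ℕ) (a : ℕ → ℕ → ℝ) : ℕ → ℕ → ℝ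
  | 0, _ => 0
  | n + 1, i => Gd N a n (i / Dn N n) +
      a n (i / Dn N n) * (if i % Dn N n = 0 then (Dn N n : ℝ) - 1 else -1)

lemma sum_range_mul' (A D : ℕ) (f : ℕ → ℝ) :
    ∑ i ∈ Finset.range (A * D), f i =
      ∑ j ∈ Finset.range A, ∑ r ∈ Finset.range D, f (j * D + r) := by
  induction A with
  | zero => simp
  | succ A ih => rw [Nat.succ_mul, Finset.sum_range_add, ih, Finset.sum_range_succ]

lemma sum_block (D : ℕ) (hD : 0 < D) (j : ℕ) (f : ℕ → ℝ) (u v : ℝ) (h0 : f (j * D) = u)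
    (h1 : ∀ r, 0 < r → r < D → f (j * D + r) = v) :
    ∑ r ∈ Finset.range D, f (j * D + r) = u + ((D : ℝ) - 1) * v := by
  obtain ⟨E, rfl⟩ : ∃ E, D = E + 1 := ⟨D - 1, by omega⟩
  rw [Finset.sum_range_succ', Finset.sum_congr rfl (g := fun _ => v)]
  · simp [h0]; ring
  · intro r hr
    rw [Finset.mem_range] at hr
    exact h1 _ (by omega) (by omega)

lemma dm (j D r : ℕ) (hr : r < D) : (j * D + r) / D = j ∧ (j * D + r) % D = r := by
  constructor
  · rw [Nat.mul_comm, Nat.mul_add_div (by omega), Nat.div_eq_of_lt hr]; rfl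
  · rw [Nat.mul_comm, Nat.mul_add_mod, Nat.mod_eq_of_lt hr]

lemma sum_Gd (N : ℕ) (hN : 4 ≤ N) (a : ℕ → ℕ → ℝ) (n : ℕ) :
    ∑ i ∈ Finset.range (2 ^ expn N n), Gd N a n i = 0 := by
  induction n with
  | zero => simp [Gd]
  | succ n ih =>
    have hD := Dn_pos N n
    rw [Dn_spec N n hN, sum_range_mul']
    have : ∀ j ∈ Finset.range (2 ^ expn N n), ∑ r ∈ Finset.range (Dn N n),
        Gd N a (n + 1) (j * Dn N n + r) = Dn N n * Gd N a n j := by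
      intro j _
      rw [sum_block (Dn N n) hD j _ (Gd N a n j + a n j * ((Dn N n : ℝ) - 1))
        (Gd N a n j + a n j * (-1))]
      · ring
      · have := dm j _ 0 hD
        simp only [add_zero] at this
        simp [Gd, hD]
      · intro r h0 hr
        have := dm j _ r hr
        rw [Gd, this.1, this.2, if_neg (by omega)]
    rw [Finset.sum_congr rfl this, ← Finset.mul_sum, ih, mul_zero]

lemma sg_cases (N n i : ℕ) : sg N n i = 1 ∨ sg N n i = -1 := by
  induction n generalizing i with
  | zero => simp [sg]
  | succ n ih => rw [sg]; split_ifs; · simp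
                 exact ih _

lemma sum_sg (N : ℕ) (hN : 4 ≤ N) (a : ℕ → ℕ → ℝ) (n : ℕ) :
    ∑ i ∈ Finset.range (2 ^ expn N n), sg N n i * |Gd N a n i| ≤ 0 := by
  induction n with
  | zero => simp [Gd]
  | succ n ih =>
    have hD := Dn_pos N n
    have hD2 : (2 : ℝ) ≤ Dn N n := by exact_mod_cast Dn_two N n hN
    rw [Dn_spec N n hN, sum_range_mul']
    have : ∀ j ∈ Finset.range (2 ^ expn N n), ∑ r ∈ Finset.range (Dn N n),
        sg N (n + 1) (j * Dn N n + r) * |Gd N a (n + 1) (j * Dn N n + r)|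
          ≤ Dn N n * (sg N n j * |Gd N a n j|) := by
      intro j _
      rw [sum_block (Dn N n) hD j (fun i => sg N (n + 1) i * |Gd N a (n + 1) i|)
        (-|Gd N a n j + a n j * ((Dn N n : ℝ) - 1)|)
        (sg N n j * |Gd N a n j + a n j * (-1)|)]
      · generalize Gd N a n j = b
        generalize a n j = x
        generalize (Dn N n : ℝ) = D at *
        have e1 : (D - 1) * |b + x * (-1)| = |(D - 1) * (b + x * (-1))| := by
          rw [abs_mul, abs_of_nonneg (by linarith : 0 ≤ D - 1)]
        have e2 : D * |b| = |D * b| := by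
          rw [abs_mul, abs_of_nonneg (by linarith : 0 ≤ D)]
        have e3 : (D - 1) * (b + x * (-1)) = D * b - (b + x * (D - 1)) := by ring
        have t1 := abs_sub (D * b) (b + x * (D - 1))
        have t2 := abs_add_le (D * b - (b + x * (D - 1))) (b + x * (D - 1))
        rw [sub_add_cancel] at t2
        rw [e3] at e1
        rcases sg_cases N n j with h | h <;> rw [h] <;> linarith
      · have := dm j _ 0 hD
        simp only [add_zero] at this
        simp [Gd, sg, hD]
      · intro r h0 hr
        have := dm j _ r hr
        rw [Gd, sg, this.1, this.2, if_neg (by omega), if_neg (by omega)]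
    refine (Finset.sum_le_sum this).trans ?_
    rw [← Finset.mul_sum]
    exact mul_nonpos_of_nonneg_of_nonpos (by positivity) ih

lemma sg_spec (N n : ℕ) (hN : 4 ≤ N) (t : ℝ) (ht : t ∈ Set.Ico (0 : ℝ) 1) :
    sg N n (fl N n t) = 1 ∨ (sg N n (fl N n t) = -1 ∧ t ∈ Pset N) := by
  induction n with
  | zero => simp [sg]
  | succ n ih =>
    rw [sg, fl_div N n hN t]
    split_ifs with h
    · right
      exact ⟨rfl, Set.mem_iUnion.mpr ⟨n, (mem_Pn N n hN t ht).mpr h⟩⟩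
    · exact ih

lemma Gd_single (N n k : ℕ) (hN : 4 ≤ N) (hk : 1 ≤ k) (t : ℝ) (ht : 0 ≤ t) (m : ℕ) :
    Gd N (fun p q => if p = n ∧ k - 1 = q then 1 else 0) m (fl N m t) =
      if n + 1 ≤ m then gNK N n k t else 0 := by
  induction m with
  | zero => simp [Gd]
  | succ m ih =>
    rw [Gd, fl_div N m hN t, ih]
    rcases lt_trichotomy m n with h | h | h
    · rw [if_neg (by omega : ¬ n + 1 ≤ m), if_neg (by omega : ¬ n + 1 ≤ m + 1),
        if_neg (by omega : ¬ (m = n ∧ _))]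
      ring
    · subst h
      rw [if_neg (by omega), if_pos (le_refl (m + 1)), gNK_eq N m k hN hk t ht]
      split_ifs <;> simp_all
    · rw [if_pos (by omega : n + 1 ≤ m), if_pos (by omega : n + 1 ≤ m + 1),
        if_neg (by omega : ¬ (m = n ∧ _))]
      ring

lemma Gd_add (N : ℕ) (a b : ℕ → ℕ → ℝ) (n i : ℕ) :
    Gd N (a + b) n i = Gd N a n i + Gd N b n i := by
  induction n generalizing i with
  | zero => simp [Gd]
  | succ n ih => simp only [Gd, ih, Pi.add_apply]; ring

lemma Gd_smul (N : ℕ) (c : ℝ) (a : ℕ → ℕ → ℝ) (n i : ℕ) :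
    Gd N (c • a) n i = c * Gd N a n i := by
  induction n generalizing i with
  | zero => simp [Gd]
  | succ n ih => simp only [Gd, ih, Pi.smul_apply, smul_eq_mul]; ring

instance : IsProbabilityMeasure muI := ⟨by simp [muI]⟩

lemma ae_mem : ∀ᵐ t ∂muI, t ∈ Set.Ico (0 : ℝ) 1 := by
  unfold muI
  exact ae_restrict_mem measurableSet_Ico

lemma fl_meas (N n : ℕ) : Measurable (fl N n) := by
  unfold fl
  exact Nat.measurable_floor.comp (measurable_const.mul measurable_id)

lemma fl_mset (N n i : ℕ) : MeasurableSet {t | fl N n t = i} :=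
  fl_meas N n (measurableSet_singleton i)

lemma fl_eq_iff (N n : ℕ) (t : ℝ) (ht : 0 ≤ t) (i : ℕ) :
    fl N n t = i ↔ t ∈ Set.Ico ((i : ℝ) / 2 ^ expn N n) ((i + 1) / 2 ^ expn N n) := by
  have hp : (0 : ℝ) < 2 ^ expn N n := by positivity
  unfold fl
  rw [Nat.floor_eq_iff (by positivity), Set.mem_Ico, div_le_iff₀ hp, lt_div_iff₀ hp, mul_comm t]

lemma muI_fl (N n i : ℕ) (hi : i < 2 ^ expn N n) :
    muI.real {t | fl N n t = i} = 1 / 2 ^ expn N n := by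
  have hp : (0 : ℝ) < 2 ^ expn N n := by positivity
  have hi' : (i : ℝ) + 1 ≤ 2 ^ expn N n := by exact_mod_cast hi
  have : {t | fl N n t = i} ∩ Set.Ico (0 : ℝ) 1
      = Set.Ico ((i : ℝ) / 2 ^ expn N n) ((i + 1) / 2 ^ expn N n) := by
    ext t
    constructor
    · rintro ⟨h, ht⟩
      exact (fl_eq_iff N n t ht.1 i).mp h
    · intro h
      have h0 : 0 ≤ t := le_trans (by positivity) h.1
      refine ⟨(fl_eq_iff N n t h0 i).mpr h, h0, lt_of_lt_of_le h.2 ?_⟩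
      rw [div_le_one hp]; exact hi'
  unfold muI
  rw [measureReal_restrict_apply (fl_mset N n i), this,
    Real.volume_real_Ico_of_le (by gcongr; linarith)]
  ring

lemma int_fl (N n : ℕ) (φ : ℕ → ℝ) :
    Integrable (fun t => φ (fl N n t)) muI ∧
    ∫ t, φ (fl N n t) ∂muI = (∑ i ∈ Finset.range (2 ^ expn N n), φ i) / 2 ^ expn N n := by
  have hae : (fun t => φ (fl N n t)) =ᵐ[muI] fun t => ∑ i ∈ Finset.range (2 ^ expn N n),
      Set.indicator {t | fl N n t = i} (fun _ => φ i) t := by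
    filter_upwards [ae_mem] with t ht
    rw [Finset.sum_eq_single (fl N n t)]
    · simp
    · intro i _ hne
      exact Set.indicator_of_notMem (fun h => hne (by exact h.symm)) _
    · intro h
      exact absurd (Finset.mem_range.mpr (fl_lt N n t ht)) h
  have hint : ∀ i ∈ Finset.range (2 ^ expn N n),
      Integrable (Set.indicator {t | fl N n t = i} (fun _ => φ i)) muI := fun i _ =>
    (integrable_const _).indicator (fl_mset N n i)
  refine ⟨(integrable_finsetSum _ hint).congr hae.symm, ?_⟩
  rw [integral_congr_ae hae, integral_finsetSum _ hint, Finset.sum_div]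
  refine Finset.sum_congr rfl fun i hi => ?_
  rw [integral_indicator_const _ (fl_mset N n i),
    muI_fl N n i (Finset.mem_range.mp hi), smul_eq_mul]
  ring

lemma gNK_meas (N n k : ℕ) : Measurable (gNK N n k) := by
  unfold gNK
  have h : Measurable fun t : ℝ => t - ((k : ℝ) - 1) / 2 ^ expn N n := by fun_prop
  exact Measurable.ite (h measurableSet_Ico) measurable_const
    (Measurable.ite (h measurableSet_Ico) measurable_const measurable_const)

lemma Pset_meas (N : ℕ) : MeasurableSet (Pset N) := by
  unfold Pset
  refine MeasurableSet.iUnion fun n => measurableSet_lt measurable_const ?_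
  exact Finset.measurable_sum _ fun k _ => gNK_meas N n k

lemma Pn_le (N n : ℕ) (hN : 4 ≤ N) : muI (Pn N n) ≤ ENNReal.ofReal (1 / 16 * (1 / 2) ^ n) := by
  have hD := Dn_pos N n
  have hDr : (0 : ℝ) < Dn N n := by exact_mod_cast hD
  have h1 : muI (Pn N n) ≤ muI (⋃ j ∈ Finset.range (2 ^ expn N n),
      {t | fl N (n + 1) t = j * Dn N n}) := by
    refine measure_mono_ae ?_
    filter_upwards [ae_mem] with t ht
    intro hP
    have hP' := (mem_Pn N n hN t ht).mp hP
    refine Set.mem_iUnion₂.mpr ⟨fl N n t, Finset.mem_range.mpr (fl_lt N n t ht), ?_⟩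
    have := Nat.div_add_mod (fl N (n + 1) t) (Dn N n)
    rw [hP', fl_div N n hN] at this
    rw [Set.mem_ofPred_eq, ← this]; ring
  refine h1.trans ((measure_biUnion_finset_le _ _).trans ?_)
  have h2 : ∀ j ∈ Finset.range (2 ^ expn N n), muI {t | fl N (n + 1) t = j * Dn N n}
      = ENNReal.ofReal (1 / 2 ^ expn N (n + 1)) := by
    intro j hj
    rw [← muI_fl N (n + 1) (j * Dn N n), ofReal_measureReal]
    rw [Dn_spec N n hN]
    exact Nat.mul_lt_mul_of_pos_right (Finset.mem_range.mp hj) hD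
  rw [Finset.sum_congr rfl h2, ← ENNReal.ofReal_sum_of_nonneg (fun _ _ => by positivity)]
  apply ENNReal.ofReal_le_ofReal
  have h : ((2 : ℝ) ^ expn N (n + 1)) = 2 ^ expn N n * (Dn N n : ℝ) := by
    exact_mod_cast Dn_spec N n hN
  have h3 : (2 : ℝ) ^ (n + 4) ≤ Dn N n := by
    unfold Dn
    push_cast
    exact pow_le_pow_right₀ (by norm_num) (dn_ge N n hN).1
  rw [Finset.sum_const, Finset.card_range, nsmul_eq_mul, h]
  push_cast
  have h4 : (2 : ℝ) ^ expn N n * (1 / (2 ^ expn N n * (Dn N n : ℝ))) = 1 / Dn N n := by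
    field_simp
  have h5 : (1 : ℝ) / 16 * (1 / 2) ^ n = 1 / 2 ^ (n + 4) := by
    rw [pow_add, one_div_pow]; field_simp; norm_num
  rw [h4, h5]
  exact one_div_le_one_div_of_le (by positivity) h3

lemma Pset_le (N : ℕ) (hN : 4 ≤ N) : muI.real (Pset N) ≤ 1 / 8 := by
  have hs : HasSum (fun n : ℕ => (1 : ℝ) / 16 * (1 / 2) ^ n) (1 / 8) := by
    have := (hasSum_geometric_two).mul_left (1 / 16 : ℝ)
    norm_num at this ⊢
    exact this
  have : muI (Pset N) ≤ ENNReal.ofReal (1 / 8) := by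
    refine (measure_iUnion_le _).trans ?_
    refine (ENNReal.tsum_le_tsum fun n => Pn_le N n hN).trans ?_
    rw [← ENNReal.ofReal_tsum_of_nonneg (fun _ => by positivity) hs.summable, hs.tsum_eq]
  exact ENNReal.toReal_le_of_le_ofReal (by norm_num) this

lemma Pset_pos (N : ℕ) (hN : 4 ≤ N) : 0 < muI.real (Pset N) := by
  have h1 := muI_fl N 1 0 (by positivity)
  have h2 : muI.real {t | fl N 1 t = 0} ≤ muI.real (Pset N) := by
    refine ENNReal.toReal_mono (measure_ne_top _ _) (measure_mono_ae ?_)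
    filter_upwards [ae_mem] with t ht
    intro h
    have h' : fl N 1 t = 0 := h
    exact Set.mem_iUnion.mpr ⟨0, (mem_Pn N 0 hN t ht).mpr (by rw [h']; simp)⟩
  refine lt_of_lt_of_le ?_ h2
  rw [h1]; positivity

lemma key_int (N : ℕ) (hN : 4 ≤ N) (a : ℕ → ℕ → ℝ) (n : ℕ) :
    ∫ t in (Pset N)ᶜ, |Gd N a n (fl N n t)| ∂muI ≤ ∫ t in Pset N, |Gd N a n (fl N n t)| ∂muI := by
  have hP := Pset_meas N
  have hi := (int_fl N n (fun i => |Gd N a n i|)).1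
  have h1 := int_fl N n (fun i => sg N n i * |Gd N a n i|)
  have h2 : ∫ t, sg N n (fl N n t) * |Gd N a n (fl N n t)| ∂muI ≤ 0 := by
    rw [h1.2]
    exact div_nonpos_of_nonpos_of_nonneg (sum_sg N hN a n) (by positivity)
  rw [← integral_indicator hP, ← integral_indicator hP.compl, ← sub_nonpos,
    ← integral_sub (hi.indicator hP.compl) (hi.indicator hP)]
  refine le_trans (integral_mono_ae ((hi.indicator hP.compl).sub (hi.indicator hP)) h1.1 ?_) h2
  filter_upwards [ae_mem] with t ht
  have h0 := abs_nonneg (Gd N a n (fl N n t))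
  by_cases hm : t ∈ Pset N
  · rcases sg_cases N n (fl N n t) with h | h <;> simp [hm, h]
  · rcases sg_spec N n hN t ht with h | h
    · simp [hm, h]
    · exact absurd h.2 hm

/-- The constant one. -/
noncomputable def oneL : Lp ℝ 1 muI := Lp.const 1 muI (1 : ℝ)

lemma oneL_spec : ∀ᵐ t ∂muI, oneL t = 1 := by
  filter_upwards [Lp.coeFn_const 1 muI (1 : ℝ)] with t ht
  exact ht

/-- generators -/
def gens (N : ℕ) : Set (Lp ℝ 1 muI) := {f : Lp ℝ 1 muI |
      (∃ c : ℝ, ∀ᵐ t ∂muI, f t = c) ∨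
      (∃ n k : ℕ, 1 ≤ k ∧ k ≤ 2 ^ expn N n ∧
        ∀ᵐ t ∂muI, f t = gNK N n k t)}

lemma span_rep (N : ℕ) (hN : 4 ≤ N) (f : Lp ℝ 1 muI) (hf : f ∈ Submodule.span ℝ (gens N)) :
    ∃ (c : ℝ) (a : ℕ → ℕ → ℝ) (M : ℕ), ∀ n, M ≤ n →
      ∀ᵐ t ∂muI, f t = c + Gd N a n (fl N n t) := by
  have hz : ∀ n i, Gd N 0 n i = 0 := fun n i => by simpa using Gd_smul N 0 0 n i
  induction hf using Submodule.span_induction with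
  | mem f hf =>
    rcases hf with ⟨c, hc⟩ | ⟨n, k, hk, -, h⟩
    · refine ⟨c, 0, 0, fun n _ => ?_⟩
      filter_upwards [hc] with t ht
      rw [ht, hz, add_zero]
    · refine ⟨0, fun p q => if p = n ∧ k - 1 = q then 1 else 0, n + 1, fun m hm => ?_⟩
      · filter_upwards [h, ae_mem] with t ht ht'
        rw [ht, Gd_single N n k hN hk t ht'.1, if_pos hm, zero_add]
  | zero =>
    refine ⟨0, 0, 0, fun n _ => ?_⟩
    filter_upwards [Lp.coeFn_zero ℝ 1 muI] with t ht
    rw [ht, hz]; simp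
  | add f g _ _ hf hg =>
    obtain ⟨c, a, M, h⟩ := hf
    obtain ⟨c', a', M', h'⟩ := hg
    refine ⟨c + c', a + a', max M M', fun n hn => ?_⟩
    filter_upwards [Lp.coeFn_add f g, h n (le_trans (le_max_left _ _) hn),
      h' n (le_trans (le_max_right _ _) hn)] with t h1 h2 h3
    rw [h1, Pi.add_apply, h2, h3, Gd_add]; ring
  | smul r f _ hf =>
    obtain ⟨c, a, M, h⟩ := hf
    refine ⟨r * c, r • a, M, fun n hn => ?_⟩
    filter_upwards [Lp.coeFn_smul r f, h n hn] with t h1 h2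
    rw [h1, Pi.smul_apply, h2, Gd_smul, smul_eq_mul]; ring

lemma coe_sub_one (f : Lp ℝ 1 muI) (c : ℝ) : ∀ᵐ t ∂muI, (f - c • oneL) t = f t - c := by
  filter_upwards [Lp.coeFn_sub f (c • oneL), Lp.coeFn_smul c oneL, oneL_spec] with t h1 h2 h3
  rw [h1, Pi.sub_apply, h2, Pi.smul_apply, h3]; simp

lemma YN_key (N : ℕ) (hN : 4 ≤ N) (f : Lp ℝ 1 muI) (hf : f ∈ YN N) :
    ∫ t in (Pset N)ᶜ, |f t - ∫ s, f s ∂muI| ∂muI ≤ ∫ t in Pset N, |f t - ∫ s, f s ∂muI| ∂muI := by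
  let T : Lp ℝ 1 muI → Lp ℝ 1 muI := fun f => |f - (∫ s, f s ∂muI) • oneL|
  have hT : ∀ f : Lp ℝ 1 muI, ∀ᵐ t ∂muI, T f t = |f t - ∫ s, f s ∂muI| := by
    intro f
    filter_upwards [Lp.coeFn_abs (f - (∫ s, f s ∂muI) • oneL),
      coe_sub_one f (∫ s, f s ∂muI)] with t h1 h2
    rw [h1, h2]
  have hTc : Continuous T := by
    have : Continuous fun f : Lp ℝ 1 muI => f - (∫ s, f s ∂muI) • oneL :=
      continuous_id.sub (continuous_integral.smul continuous_const)
    exact this.sup this.neg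
  have hTi : ∀ (s : Set ℝ) (f : Lp ℝ 1 muI),
      ∫ t in s, T f t ∂muI = ∫ t in s, |f t - ∫ s, f s ∂muI| ∂muI := fun s f =>
    integral_congr_ae (ae_restrict_of_ae (hT f))
  have hcl : IsClosed {f : Lp ℝ 1 muI | ∫ t in (Pset N)ᶜ, T f t ∂muI ≤ ∫ t in Pset N, T f t ∂muI} :=
    isClosed_le ((continuous_setIntegral _).comp hTc) ((continuous_setIntegral _).comp hTc)
  have hsub : closure ((Submodule.span ℝ (gens N) : Submodule ℝ (Lp ℝ 1 muI)) : Set (Lp ℝ 1 muI)) ⊆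
      {f : Lp ℝ 1 muI | ∫ t in (Pset N)ᶜ, T f t ∂muI ≤ ∫ t in Pset N, T f t ∂muI} := by
    refine closure_minimal ?_ hcl
    intro f hf
    obtain ⟨c, a, M, h⟩ := span_rep N hN f hf
    have h := h M le_rfl
    have hG := int_fl N M (Gd N a M)
    have hc : ∫ s, f s ∂muI = c := by
      rw [integral_congr_ae h, integral_add (integrable_const _) hG.1, hG.2, sum_Gd N hN]
      simp
    have hTG : ∀ᵐ t ∂muI, T f t = |Gd N a M (fl N M t)| := by
      filter_upwards [hT f, h] with t h1 h2
      rw [h1, h2, hc]; simp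
    rw [Set.mem_ofPred_eq, integral_congr_ae (ae_restrict_of_ae hTG),
      integral_congr_ae (ae_restrict_of_ae (s := Pset N) hTG)]
    exact key_int N hN a M
  have hf' : f ∈ closure ((Submodule.span ℝ (gens N) : Submodule ℝ (Lp ℝ 1 muI)) : Set _) := hf
  have := hsub hf'
  rw [Set.mem_ofPred_eq, hTi, hTi] at this
  exact this

/-- For `N ≥ 4` the subspace `Y_N` of `L₁[0,1]` fails the Daugavet property: the functional
`g* = ∫ · χ_{[0,1]∖P}` has norm `≤ 1` on `Y_N`, the slice `S(g*, ε)` of `B(Y_N)` with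
`ε = 2·|P|` is nonempty, yet every `f` in this slice satisfies `‖f - 1‖ ≤ 2 - ε`. -/
theorem stmt_19 (N : ℕ) (hN : 4 ≤ N) :
    ∃ (g : YN N →L[ℝ] ℝ) (ε : ℝ) (one : Lp ℝ 1 muI),
      ‖g‖ ≤ 1 ∧ 0 < ε ∧ ε = 2 * (muI (Pset N)).toReal ∧
      (∀ᵐ t ∂muI, one t = 1) ∧
      (∀ f : YN N, g f = ∫ t, (f : Lp ℝ 1 muI) t ∂(muI.restrict (Pset N)ᶜ)) ∧
      (∃ f : YN N, ‖(f : Lp ℝ 1 muI)‖ ≤ 1 ∧ 1 - ε ≤ g f) ∧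
      (∀ f : YN N, ‖(f : Lp ℝ 1 muI)‖ ≤ 1 → 1 - ε ≤ g f →
        ‖(f : Lp ℝ 1 muI) - one‖ ≤ 2 - ε) := by
  have hP := Pset_meas N
  have hp8 := Pset_le N hN
  have hp0 := Pset_pos N hN
  set p := muI.real (Pset N) with hp
  have hint : ∀ f : Lp ℝ 1 muI, Integrable f muI := fun f => L1.integrable_coeFn f
  have hnorm : ∀ f : Lp ℝ 1 muI, ‖f‖ = ∫ t, |f t| ∂muI := fun f => L1.norm_eq_integral_norm f
  let g : YN N →L[ℝ] ℝ := LinearMap.mkContinuous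
    { toFun := fun f => ∫ t, (f : Lp ℝ 1 muI) t ∂(muI.restrict (Pset N)ᶜ)
      map_add' := fun f h => by
        rw [← integral_add (hint _).integrableOn (hint _).integrableOn]
        exact integral_congr_ae (ae_restrict_of_ae (Lp.coeFn_add (f : Lp ℝ 1 muI) h))
      map_smul' := fun c f => by
        rw [RingHom.id_apply, ← integral_smul]
        exact integral_congr_ae (ae_restrict_of_ae (Lp.coeFn_smul c (f : Lp ℝ 1 muI))) } 1
    (fun f => by
      rw [one_mul]
      refine (norm_integral_le_integral_norm _).trans ?_
      change _ ≤ ‖(f : Lp ℝ 1 muI)‖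
      rw [L1.norm_eq_integral_norm]
      exact setIntegral_le_integral (hint _).norm (Filter.Eventually.of_forall fun _ => norm_nonneg _))
  have hg : ∀ f : YN N, g f = ∫ t, (f : Lp ℝ 1 muI) t ∂(muI.restrict (Pset N)ᶜ) := fun f => rfl
  have hcompl : muI.real (Pset N)ᶜ = 1 - p := by
    rw [measureReal_compl hP]; simp [hp]
  refine ⟨g, 2 * p, oneL, LinearMap.mkContinuous_norm_le _ zero_le_one _, by linarith, rfl,
    oneL_spec, hg, ?_, ?_⟩
  · refine ⟨⟨oneL, Submodule.le_topologicalClosure _ (Submodule.subset_span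
      (Or.inl ⟨1, oneL_spec⟩))⟩, ?_, ?_⟩
    · rw [hnorm, integral_congr_ae (g := fun _ => (1 : ℝ))]
      · simp
      · filter_upwards [oneL_spec] with t ht
        rw [ht]; simp
    · rw [hg, integral_congr_ae (g := fun _ => (1 : ℝ)) (ae_restrict_of_ae oneL_spec)]
      have : ∫ _ in (Pset N)ᶜ, (1 : ℝ) ∂muI = 1 - p := by simp [hcompl]
      rw [this]; linarith
  · rintro ⟨f, hf⟩ hf1 hgf
    rw [hg] at hgf
    simp only at hf1 hgf ⊢
    have hk := YN_key N hN f hf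
    set c := ∫ s, f s ∂muI with hc
    have i1 := hint f
    have i2 : Integrable (fun t => |f t|) muI := i1.abs
    have i3 : Integrable (fun t => |f t - c|) muI := (i1.sub (integrable_const c)).abs
    have s1 := integral_add_compl hP i1
    have s2 := integral_add_compl hP i2
    have s3 := integral_add_compl hP i3
    rw [← hc] at s1
    rw [← hnorm] at s2
    have a1 : |∫ t in Pset N, f t ∂muI| ≤ ∫ t in Pset N, |f t| ∂muI :=
      abs_integral_le_integral_abs
    have a2 : |∫ t in (Pset N)ᶜ, f t ∂muI| ≤ ∫ t in (Pset N)ᶜ, |f t| ∂muI :=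
      abs_integral_le_integral_abs
    have a3 : ∫ t in Pset N, |f t - c| ∂muI ≤ (∫ t in Pset N, |f t| ∂muI) + |c| * p := by
      have e : ∫ t in Pset N, (|f t| + |c|) ∂muI = (∫ t in Pset N, |f t| ∂muI) + |c| * p := by
        rw [integral_add i2.integrableOn (integrable_const _)]
        simp [hp, mul_comm]
      rw [← e]
      exact integral_mono i3.integrableOn (i2.add (integrable_const _)).integrableOn
        fun t => abs_sub _ _
    have a4 : ‖f - oneL‖ ≤ (∫ t, |f t - c| ∂muI) + |c - 1| := by
      have e : ∫ t, (|f t - c| + |c - 1|) ∂muI = (∫ t, |f t - c| ∂muI) + |c - 1| := by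
        rw [integral_add i3 (integrable_const _)]; simp
      rw [← e, hnorm]
      refine integral_mono_ae (hint _).abs (i3.add (integrable_const _)) ?_
      filter_upwards [coe_sub_one f 1] with t ht
      rw [one_smul] at ht
      rw [ht]
      exact abs_sub_le _ _ _
    have b1 := abs_le.mp a1
    have b2 := abs_le.mp a2
    have c1 : c ≤ 1 := by linarith
    have c0 : 1 - 4 * p ≤ c := by linarith
    have cpos : 0 ≤ c := by linarith
    rw [abs_of_nonneg cpos] at a3
    rw [abs_of_nonpos (by linarith : c - 1 ≤ 0)] at a4
    have : c * p ≤ p := by nlinarith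
    linarith
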